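/- Let α be a partition with all parts at least 2, ℓ(α) ≥ 3, and overlapping partition p = (2,1,0,…,0) (that is, p_1 = 2, p_2 = 1, and p_i = 0 for i ≥ 3). Then R_α^p has full Schur support, i.e. [R_α^p] = [α, (|α|−2, 2)], if and only if α_1 < Σ_{q=2}^{ℓ(α)} α_q. -/

import Mathlib

namespace RibbonSupport

/-- A partition: a weakly decreasing list of positive integers. -/
def IsPartition (a : List ℕ) : Prop := a.Pairwise (· ≥ ·) ∧ ∀ x ∈ a, 0 < x

/-- All parts of the list are at least `m`. -/
def PartsGE (a : List ℕ) (m : ℕ) : Prop := ∀ x ∈ a, m ≤ x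

/-- Dominance order `lam ⪯ mu` on partitions of the same size. -/
def DomLE (lam mu : List ℕ) : Prop :=
  lam.sum = mu.sum ∧ ∀ i, (lam.take i).sum ≤ (mu.take i).sum

/-- The number of nonzero parts. -/
def lenp (p : List ℕ) : ℕ := p.countP (fun x => decide (x ≠ 0))

/-- `p` is an overlapping partition for the monotone ribbon with row lengths `a`:
`p` has the same length as `a`, its last entry is `0`, and consecutive entries
decrease by `0` or `1`. -/
def IsOverlapSeq (a p : List ℕ) : Prop :=
  p.length = a.length ∧ p.getD (a.length - 1) 0 = 0 ∧
    ∀ i, i + 1 < a.length →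
      p.getD i 0 = p.getD (i + 1) 0 ∨ p.getD i 0 = p.getD (i + 1) 0 + 1

/-- Rows `i` and `i+1` (0-based, top to bottom) of `R_a^p` overlap
(share exactly one column) exactly when `p_i = p_{i+1} + 1`. -/
def ovOf (p : List ℕ) : ℕ → Bool := fun i => decide (p.getD i 0 = p.getD (i + 1) 0 + 1)

def rowOffset (a : List ℕ) (i : ℕ) : ℕ := (a.take i).sum

/-- `w` is the reading word (rows right-to-left, top to bottom) of a semistandard filling of
the ribbon with row lengths `a` (top to bottom) in which consecutive rows `i`, `i+1` share
exactly one column when `ov i = true` and no column otherwise.  Semistandardness amounts to: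
within each row block the word is weakly decreasing (rows weakly increase left to right), and
at each overlapping gap the word strictly increases (columns strictly increase downwards). -/
def IsRibbonWord (a : List ℕ) (ov : ℕ → Bool) (w : List ℕ) : Prop :=
  w.length = a.sum ∧
  (∀ i j, i < a.length → j + 1 < a.getD i 0 →
    w.getD (rowOffset a i + j + 1) 0 ≤ w.getD (rowOffset a i + j) 0) ∧
  (∀ i, i + 1 < a.length → ov i = true →
    w.getD (rowOffset a (i + 1) - 1) 0 < w.getD (rowOffset a (i + 1)) 0)

/-- Yamanouchi (lattice) word: each prefix has at least as many letters `j` as `j+1`. -/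
def IsYam (w : List ℕ) : Prop := ∀ k j, (w.take k).count (j + 2) ≤ (w.take k).count (j + 1)

/-- The word `w` has content `nu` (and only positive letters). -/
def HasContent (w : List ℕ) (nu : List ℕ) : Prop :=
  (∀ j, w.count (j + 1) = nu.getD j 0) ∧ w.count 0 = 0

/-- There is an LR filling of the ribbon `(a, ov)` with content `nu`. -/
def InSupportOv (a : List ℕ) (ov : ℕ → Bool) (nu : List ℕ) : Prop :=
  ∃ w : List ℕ, IsRibbonWord a ov w ∧ IsYam w ∧ HasContent w nu

/-- `nu` is in the Schur support of the monotone ribbon `R_a^p`. -/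
def InSupport (a p nu : List ℕ) : Prop := InSupportOv a (ovOf p) nu

/-- `nu` is in the Schur support of the connected ribbon `R_a`. -/
def InSupportConn (a nu : List ℕ) : Prop := InSupportOv a (fun _ => true) nu

/-- `nu` belongs to the Schur interval `[a, (|a| - p₁, p₁)]` in dominance order. -/
def InInterval (a p nu : List ℕ) : Prop :=
  DomLE a nu ∧ DomLE nu [a.sum - p.getD 0 0, p.getD 0 0]

/-- The Schur support of `R_a^p`, as a set of partitions. -/
def SupportSet (a p : List ℕ) : Set (List ℕ) := {nu | IsPartition nu ∧ InSupport a p nu}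

/-- The Schur interval of `R_a^p`, as a set of partitions. -/
def IntervalSet (a p : List ℕ) : Set (List ℕ) := {nu | IsPartition nu ∧ InInterval a p nu}

/-- `R_a^p` has full Schur support. -/
def FullSupport (a p : List ℕ) : Prop := SupportSet a p = IntervalSet a p

/-- The Schur support of the connected ribbon `R_a`, as a set of partitions. -/
def SupportSetConn (a : List ℕ) : Set (List ℕ) := {nu | IsPartition nu ∧ InSupportConn a nu}

/-- `ϱ_i` (1-based `i`): `Σ_{q=i+1}^{ℓ(a)} a_q − p_{i+1} + 1`. -/
def rho (a p : List ℕ) (i : ℕ) : ℕ := (a.drop i).sum + 1 - p.getD i 0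

/-- Entry `j` (1-based) of the `i`-witness vector: `[ϱ_i − a_j]₊`. -/
def wit (a p : List ℕ) (i j : ℕ) : ℕ := rho a p i - a.getD (j - 1) 0

/-- Size of the `i`-witness vector. -/
def witSize (a p : List ℕ) (i : ℕ) : ℕ := ∑ j ∈ Finset.Icc 1 i, wit a p i j

/-! ### Tableaux -/

/-- Cells (0-based `(row, column)`) of the Young diagram of `lam`. -/
def cells (lam : List ℕ) : Finset (ℕ × ℕ) :=
  (Finset.range lam.length ×ˢ Finset.range (lam.sum + 1)).filter
    (fun x => x.2 < lam.getD x.1 0)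

/-- `T` is a semistandard Young tableau of shape `lam` and content `al`
(normalized to vanish off the diagram). -/
def IsTab (lam al : List ℕ) (T : ℕ × ℕ → ℕ) : Prop :=
  (∀ x, x ∉ cells lam → T x = 0) ∧
  (∀ x ∈ cells lam, 1 ≤ T x) ∧
  (∀ i c, (i, c + 1) ∈ cells lam → T (i, c) ≤ T (i, c + 1)) ∧
  (∀ i c, (i + 1, c) ∈ cells lam → T (i, c) < T (i + 1, c)) ∧
  (∀ k, ((cells lam).filter (fun x => T x = k + 1)).card = al.getD k 0)

/-- Standardization of a tableau: entries are renumbered `1, …, N` in increasing order of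
value, entries of equal value being numbered from southwest to northeast (by column). -/
def stdz (lam : List ℕ) (T : ℕ × ℕ → ℕ) : ℕ × ℕ → ℕ := fun x =>
  if x ∈ cells lam then
    ((cells lam).filter (fun y => T y < T x ∨ (T y = T x ∧ y.2 < x.2))).card + 1
  else 0

/-- `n` is a descent of the standard tableau `U`: the entry `n+1` lies in a strictly
lower row than the entry `n`. -/
def IsDescent (lam : List ℕ) (U : ℕ × ℕ → ℕ) (n : ℕ) : Prop :=
  ∃ x ∈ cells lam, ∃ y ∈ cells lam, U x = n ∧ U y = n + 1 ∧ x.1 < y.1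

/-- `S(al)`: the set of proper partial sums of the composition `al`. -/
def Sset (al : List ℕ) : Set ℕ := {n | ∃ k, 0 < k ∧ k < al.length ∧ n = (al.take k).sum}

/-- `s ∈ D(T)`: some entry `s+1` of `T` lies in a strictly lower row than some entry `s`. -/
def TabDescent (lam : List ℕ) (T : ℕ × ℕ → ℕ) (s : ℕ) : Prop :=
  ∃ x ∈ cells lam, ∃ y ∈ cells lam, T x = s ∧ T y = s + 1 ∧ x.1 < y.1

/-- The word `w_{T̂}` of `T`: its `u`-th letter (1-based) is the 1-based row index of the
entry `u` of the standardization `T̂` of `T`. -/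
def wordOf (lam : List ℕ) (T : ℕ × ℕ → ℕ) : List ℕ :=
  (List.range lam.sum).map fun n =>
    ∑ x ∈ (cells lam).filter (fun x => stdz lam T x = n + 1), (x.1 + 1)

/-- `j ∈ {2, …, ℓ(al)}` is a critical number of `T ∈ Tab(lam, al)`:
`w_{α_1+⋯+α_{j-1}} = w_{α_1+⋯+α_{j-1}+1}` in the word of `T`. -/
def CriticalNum (lam al : List ℕ) (T : ℕ × ℕ → ℕ) (j : ℕ) : Prop :=
  2 ≤ j ∧ j ≤ al.length ∧
    (wordOf lam T).getD ((al.take (j - 1)).sum - 1) 0 =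
      (wordOf lam T).getD ((al.take (j - 1)).sum) 0

/-- `j ∈ {2, …, ℓ(al)}` is a negligible critical number of `T`:
`w_{α_1+⋯+α_{j-1}} > w_{α_1+⋯+α_{j-1}+1}` in the word of `T`. -/
def NegligibleNum (lam al : List ℕ) (T : ℕ × ℕ → ℕ) (j : ℕ) : Prop :=
  2 ≤ j ∧ j ≤ al.length ∧
    (wordOf lam T).getD ((al.take (j - 1)).sum) 0 <
      (wordOf lam T).getD ((al.take (j - 1)).sum - 1) 0

/-- The overlapping partition of the ribbon encoded by its gap pattern `b`
(`b j = true` iff rows `j` and `j+1`, 0-based, overlap). -/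
def povOf (b : List Bool) : List ℕ :=
  (List.range (b.length + 1)).map fun i => (b.drop i).count true

/-! ### Connected ribbons with rows in arbitrary order -/

/-- Starting column (0-based) of row `i` of the connected ribbon with row lengths `b`. -/
def startConn (b : List ℕ) (i : ℕ) : ℕ := (b.drop (i + 1)).sum + (i + 1) - b.length

/-- Number of columns of the connected ribbon with row lengths `b`. -/
def ncols (b : List ℕ) : ℕ := b.sum + 1 - b.length

/-- Length of column `c` of the connected ribbon with row lengths `b`. -/
def colLen (b : List ℕ) (c : ℕ) : ℕ :=
  ((Finset.range b.length).filter
    (fun i => startConn b i ≤ c ∧ c < startConn b i + b.getD i 0)).card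

/-- Deletion rank of row `j`: the number of rows deleted strictly before row `j` when one
repeatedly deletes a longest remaining row in highest (most northern) position. -/
def delRank (g : List ℕ) (j : ℕ) : ℕ :=
  ((Finset.range g.length).filter
    (fun j' => g.getD j 0 < g.getD j' 0 ∨ (g.getD j' 0 = g.getD j 0 ∧ j' < j))).card

/-- The overlapping partition of the connected ribbon with row lengths `g`:
its `(d+1)`-st entry is the number of length-two columns of the ribbon remaining
after deleting `d` rows as above, i.e. the number of adjacent pairs of surviving rows. -/
def ppiList (g : List ℕ) : List ℕ :=
  (List.range g.length).map fun d =>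
    ((Finset.range (g.length - 1)).filter
      (fun j => d ≤ delRank g j ∧ d ≤ delRank g (j + 1))).card

/-!
Read a content `ν` of an LR filling of the ribbon with overlaps `p` off its word. Row `i` contains
only letters at most `i`, so `α ⪯ ν`; and each of the `p₁` overlaps forces a letter other than `1`,
so `ν₁ ≤ |α| - p₁`. Hence the support always lies in the interval.

For `p = (2, 1, 0, …, 0)`, suppose first that `α₁ ≥ α₂ + ⋯`. Then `(α₁, α₂ + ⋯)` lies in the
interval but not in the support: the first row exhausts the `1`s, so the second row consists of
`2`s, and the overlap forces a `3` into the third.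

Suppose now that `α₁ < α₂ + ⋯`. The two-row partition with first part `α₁` is then not in the
interval, and every `ν` in the interval is realised by induction on the number of rows. Removing the
last, non-overlapping, row means removing a horizontal strip from `ν` so that the rest stays in the
interval for the shorter ribbon and again avoids that two-row partition. The strip lying as low as
possible does this unless `ν` has at most three parts, where a suitable strip is written down
directly. For the remaining three rows it suffices to choose the number of `1`s in the second row.
-/

theorem rowOffset_zero (a : List ℕ) : rowOffset a 0 = 0 := rfl

theorem rowOffset_succ (a : List ℕ) (i : ℕ) :
    rowOffset a (i + 1) = rowOffset a i + a.getD i 0 := by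
  simp only [rowOffset, List.take_add_one, List.sum_append, List.getD]
  cases a[i]? <;> simp

theorem rowOffset_one (a : List ℕ) : rowOffset a 1 = a.getD 0 0 := by
  rw [rowOffset_succ, rowOffset_zero, zero_add]

theorem rowOffset_eq_sum_range (a : List ℕ) (i : ℕ) :
    rowOffset a i = ∑ j ∈ Finset.range i, a.getD j 0 := by
  induction i with
  | zero => rfl
  | succ i ih => rw [rowOffset_succ, ih, Finset.sum_range_succ]

theorem rowOffset_mono (a : List ℕ) : Monotone (rowOffset a) :=
  monotone_nat_of_le_succ fun i => by simp [rowOffset_succ]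

theorem rowOffset_of_length_le {a : List ℕ} {i : ℕ} (h : a.length ≤ i) :
    rowOffset a i = a.sum := by
  rw [rowOffset, List.take_of_length_le h]

theorem rowOffset_le_sum (a : List ℕ) (i : ℕ) : rowOffset a i ≤ a.sum :=
  (List.take_sublist i a).sum_le_sum fun _ _ => Nat.zero_le _

theorem getD_zero_add_sum_drop_one (a : List ℕ) : a.getD 0 0 + (a.drop 1).sum = a.sum := by
  rw [← rowOffset_one, rowOffset, List.sum_take_add_sum_drop]

theorem rowOffset_append_of_le_length {b : List ℕ} {i : ℕ} (h : i ≤ b.length) (c : List ℕ) :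
    rowOffset (b ++ c) i = rowOffset b i := by
  rw [rowOffset, List.take_append_of_le_length h, rowOffset]

theorem rowOffset_lt_rowOffset {a : List ℕ} (ha : ∀ x ∈ a, 0 < x) {i j : ℕ} (hij : i < j)
    (hi : i < a.length) : rowOffset a i < rowOffset a j := by
  have hpos : 0 < a.getD i 0 := by
    rw [List.getD_eq_getElem _ _ hi]
    exact ha _ (List.getElem_mem hi)
  have := rowOffset_mono a hij
  rw [rowOffset_succ] at this
  omega

theorem rowOffset_add_le_rowOffset_concat {a : List ℕ} {c : ℕ} (hc : ∀ x ∈ a, c ≤ x) (i : ℕ) :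
    rowOffset a i + c ≤ rowOffset (a ++ [c]) (i + 1) := by
  rcases lt_or_ge i a.length with hi | hi
  · rw [rowOffset_append_of_le_length hi, rowOffset_succ, List.getD_eq_getElem _ _ hi]
    exact Nat.add_le_add_left (hc _ (List.getElem_mem hi)) _
  · rw [rowOffset_of_length_le hi, rowOffset_of_length_le (by simpa using hi)]
    simp

theorem getD_succ_le_getD {l : List ℕ} (hl : l.Pairwise (· ≥ ·)) (i : ℕ) :
    l.getD (i + 1) 0 ≤ l.getD i 0 := by
  rcases lt_or_ge (i + 1) l.length with h | h
  · rw [List.getD_eq_getElem _ _ h, List.getD_eq_getElem _ _ (by omega)]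
    exact List.pairwise_iff_getElem.1 hl _ _ _ _ (Nat.lt_succ_self i)
  · rw [List.getD_eq_default _ _ h]
    exact Nat.zero_le _

theorem antitone_getD {l : List ℕ} (hl : l.Pairwise (· ≥ ·)) : Antitone (l.getD · 0) :=
  antitone_nat_of_succ_le (getD_succ_le_getD hl)

theorem length_eq_sum_count {w : List ℕ} {i : ℕ} (h : ∀ x ∈ w, 1 ≤ x ∧ x ≤ i) :
    w.length = ∑ j ∈ Finset.range i, w.count (j + 1) := by
  have hmem : ∀ x ∈ (w : Multiset ℕ), x ∈ Finset.Ico 1 (i + 1) := fun x hx =>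
    Finset.mem_Ico.2 ⟨(h x hx).1, Nat.lt_succ_of_le (h x hx).2⟩
  have hsum := Multiset.sum_count_eq_card hmem
  rw [Finset.sum_Ico_eq_sum_range] at hsum
  simpa [add_comm 1] using hsum.symm

theorem card_filter_getD_eq_count (w : List ℕ) (x : ℕ) :
    ((Finset.range w.length).filter fun i => w.getD i 0 = x).card = w.count x := by
  induction w using List.reverseRecOn with
  | nil => simp
  | append_singleton w y ih =>
    have hw : ∀ i ∈ Finset.range w.length, ((w ++ [y]).getD i 0 = x ↔ w.getD i 0 = x) :=
      fun i hi => by rw [List.getD_append _ _ _ _ (Finset.mem_range.1 hi)]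
    rw [List.length_append, List.length_singleton, Finset.range_add_one, Finset.filter_insert,
      Finset.filter_congr hw, List.count_append, ← ih, List.getD_append_right _ _ _ _ le_rfl]
    by_cases h : y = x <;> simp [h]

theorem count_add_card_le_length {w : List ℕ} {x : ℕ} {s : Finset ℕ}
    (hs : ∀ i ∈ s, i < w.length ∧ w.getD i 0 ≠ x) : w.count x + s.card ≤ w.length := by
  have hsub : s ⊆ (Finset.range w.length).filter fun i => ¬ w.getD i 0 = x := fun i hi =>
    Finset.mem_filter.2 ⟨Finset.mem_range.2 (hs i hi).1, (hs i hi).2⟩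
  have hsplit := Finset.card_filter_add_card_filter_not (s := Finset.range w.length)
    (fun i => w.getD i 0 = x)
  have hcard := Finset.card_le_card hsub
  rw [card_filter_getD_eq_count, Finset.card_range] at hsplit
  omega

/-! ### Letters of an LR word -/

theorem one_le_getD {w : List ℕ} (h : w.count 0 = 0) {k : ℕ} (hk : k < w.length) :
    1 ≤ w.getD k 0 := by
  rw [List.getD_eq_getElem _ _ hk, Nat.one_le_iff_ne_zero]
  exact fun h0 => List.count_eq_zero.1 h (h0 ▸ List.getElem_mem hk)

theorem IsYam.exists_lt_getD_eq {w : List ℕ} (hy : IsYam w) {k y : ℕ}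
    (hk : w.getD k 0 = y + 2) : ∃ k' < k, w.getD k' 0 = y + 1 := by
  have hlt : k < w.length := by
    by_contra h
    rw [List.getD_eq_default _ _ (not_lt.1 h)] at hk
    omega
  rw [List.getD_eq_getElem _ _ hlt] at hk
  have hcount := hy (k + 1) y
  rw [List.take_succ_eq_append_getElem hlt, hk, List.count_append, List.count_append,
    List.count_singleton_self, List.count_singleton, if_neg (by simp)] at hcount
  have hmem : y + 1 ∈ w.take k := List.count_pos_iff.1 (by omega)
  obtain ⟨k', hk', hw⟩ := List.mem_take_iff_getElem.1 hmem
  exact ⟨k', by omega, by rw [List.getD_eq_getElem _ _ (by omega), hw]⟩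

section LRWord

variable {a w : List ℕ} {ov : ℕ → Bool}

theorem IsRibbonWord.getD_le_getD_rowOffset (hr : IsRibbonWord a ov w) {i j : ℕ}
    (hi : i < a.length) (hj : j < a.getD i 0) :
    w.getD (rowOffset a i + j) 0 ≤ w.getD (rowOffset a i) 0 := by
  induction j with
  | zero => exact le_rfl
  | succ j ih => exact (hr.2.1 i j hi hj).trans (ih (by omega))

-- A letter `y + 2` opening row `i` forces a letter `y + 1` in an earlier row.
theorem getD_le_of_lt_rowOffset (hr : IsRibbonWord a ov w) (hy : IsYam w) {i k : ℕ}
    (hk : k < rowOffset a i) : w.getD k 0 ≤ i := by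
  induction i generalizing k with
  | zero => exact absurd hk (Nat.not_lt_zero k)
  | succ i ih =>
    rcases lt_or_ge k (rowOffset a i) with hki | hki
    · exact (ih hki).trans i.le_succ
    have hopen : w.getD (rowOffset a i) 0 ≤ i + 1 := by
      by_contra! hlarge
      obtain ⟨y, hy2⟩ := Nat.exists_eq_add_of_le' (show 2 ≤ w.getD (rowOffset a i) 0 by omega)
      obtain ⟨k', hk', hy1⟩ := hy.exists_lt_getD_eq hy2
      have := ih hk'
      omega
    rw [rowOffset_succ] at hk
    have hi : i < a.length := by
      by_contra h
      rw [List.getD_eq_default _ _ (not_lt.1 h)] at hk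
      omega
    obtain ⟨j, rfl⟩ := Nat.exists_eq_add_of_le hki
    exact (hr.getD_le_getD_rowOffset hi (by omega)).trans hopen

theorem bounds_of_mem_take_rowOffset (hr : IsRibbonWord a ov w) (hy : IsYam w)
    (h0 : w.count 0 = 0) (i : ℕ) : ∀ x ∈ w.take (rowOffset a i), 1 ≤ x ∧ x ≤ i := by
  intro x hx
  obtain ⟨k, hk, rfl⟩ := List.mem_take_iff_getElem.1 hx
  rw [lt_min_iff] at hk
  rw [← List.getD_eq_getElem w 0 hk.2]
  exact ⟨one_le_getD h0 hk.2, getD_le_of_lt_rowOffset hr hy hk.1⟩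

theorem bounds_of_mem (hr : IsRibbonWord a ov w) (hy : IsYam w) (h0 : w.count 0 = 0) :
    ∀ x ∈ w, 1 ≤ x ∧ x ≤ a.length := by
  have h := bounds_of_mem_take_rowOffset hr hy h0 a.length
  rwa [rowOffset_of_length_le le_rfl, ← hr.1, List.take_length] at h

theorem sum_count_take_rowOffset (hr : IsRibbonWord a ov w) (hy : IsYam w)
    (h0 : w.count 0 = 0) (i : ℕ) :
    ∑ j ∈ Finset.range i, (w.take (rowOffset a i)).count (j + 1) = rowOffset a i := by
  rw [← length_eq_sum_count (bounds_of_mem_take_rowOffset hr hy h0 i), List.length_take, hr.1,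
    min_eq_left (rowOffset_le_sum a i)]

theorem domLE_of_inSupportOv {nu : List ℕ} (h : InSupportOv a ov nu) : DomLE a nu := by
  obtain ⟨w, hr, hy, hc, h0⟩ := h
  have hle (i : ℕ) : rowOffset a i ≤ rowOffset nu i := by
    rw [← sum_count_take_rowOffset hr hy h0 i, rowOffset_eq_sum_range nu]
    exact Finset.sum_le_sum fun j _ => (hc j).symm ▸ (List.take_sublist _ w).count_le _
  refine ⟨?_, hle⟩
  let m := max a.length nu.length
  have hletters : ∀ x ∈ w, 1 ≤ x ∧ x ≤ m := fun x hx =>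
    (bounds_of_mem hr hy h0 x hx).imp_right (le_max_of_le_left ·)
  calc a.sum = ∑ j ∈ Finset.range m, w.count (j + 1) := by
        rw [← hr.1, length_eq_sum_count hletters]
    _ = rowOffset nu m := by simp only [hc, rowOffset_eq_sum_range]
    _ = nu.sum := rowOffset_of_length_le (le_max_right _ _)

theorem two_le_getD_rowOffset_succ (hr : IsRibbonWord a ov w) (h0 : w.count 0 = 0) {i : ℕ}
    (hi : i + 1 < a.length) (hov : ov i = true) :
    rowOffset a (i + 1) < w.length ∧ 2 ≤ w.getD (rowOffset a (i + 1)) 0 := by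
  have hlt := hr.2.2 i hi hov
  have hlen : rowOffset a (i + 1) < w.length := by
    by_contra h
    rw [List.getD_eq_default _ _ (not_lt.1 h)] at hlt
    omega
  have := one_le_getD h0 (k := rowOffset a (i + 1) - 1) (by omega)
  exact ⟨hlen, by omega⟩

-- Each overlap contributes a letter greater than `1`, at the start of its lower row.
theorem count_one_add_card_overlaps_le (ha : ∀ x ∈ a, 0 < x) (hr : IsRibbonWord a ov w)
    (h0 : w.count 0 = 0) :
    w.count 1 + ((Finset.range (a.length - 1)).filter fun i => ov i = true).card ≤ a.sum := by
  set s := (Finset.range (a.length - 1)).filter fun i => ov i = true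
  have hs : ∀ i ∈ s, i + 1 < a.length ∧ ov i = true := fun i hi => by
    have := Finset.mem_filter.1 hi
    rw [Finset.mem_range] at this
    exact ⟨by omega, this.2⟩
  have hinj : Set.InjOn (fun i => rowOffset a (i + 1)) s := by
    intro i hi j hj hij
    have hi' := (hs i hi).1
    have hj' := (hs j hj).1
    rcases lt_trichotomy i j with h | h | h
    · exact absurd hij (rowOffset_lt_rowOffset ha (by omega) hi').ne
    · exact h
    · exact absurd hij (rowOffset_lt_rowOffset ha (by omega) hj').ne'
  rw [← hr.1, ← Finset.card_image_of_injOn hinj]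
  refine count_add_card_le_length fun k hk => ?_
  obtain ⟨i, hi, rfl⟩ := Finset.mem_image.1 hk
  have := two_le_getD_rowOffset_succ hr h0 (hs i hi).1 (hs i hi).2
  exact ⟨this.1, by omega⟩

end LRWord

/-! ### The support lies in the interval -/

theorem IsOverlapSeq.card_overlaps {a p : List ℕ} (hp : IsOverlapSeq a p) :
    ((Finset.range (a.length - 1)).filter fun i => ovOf p i = true).card = p.getD 0 0 := by
  have htelescope : ∀ m ≤ a.length - 1,
      ((Finset.range m).filter fun i => ovOf p i = true).card + p.getD m 0 = p.getD 0 0 := by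
    intro m hm
    induction m with
    | zero => simp
    | succ m ih =>
      rw [← ih (by omega), Finset.range_add_one, Finset.filter_insert]
      rcases hp.2.2 m (by omega) with h | h
      · rw [if_neg (by rw [ovOf, decide_eq_true_iff]; omega), h]
      · rw [if_pos (by rwa [ovOf, decide_eq_true_iff]), Finset.card_insert_of_notMem (by simp), h]
        omega
  simpa only [hp.2.1, add_zero] using htelescope _ le_rfl

theorem domLE_pair {nu : List ℕ} {m : ℕ} (h : nu.getD 0 0 + m ≤ nu.sum) :
    DomLE nu [nu.sum - m, m] := by
  refine ⟨by simp only [List.sum_cons, List.sum_nil]; omega, ?_⟩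
  rintro (_ | _ | i)
  · simp
  · change rowOffset nu 1 ≤ _
    rw [rowOffset_one]
    simp only [zero_add, List.take_succ_cons, List.take_zero, List.sum_singleton]
    omega
  · have := rowOffset_le_sum nu (i + 1 + 1)
    simp only [rowOffset] at this
    simp only [List.take_succ_cons, List.take_nil, List.sum_cons, List.sum_nil]
    omega

theorem supportSet_subset_intervalSet {a p : List ℕ} (ha : ∀ x ∈ a, 0 < x)
    (hp : IsOverlapSeq a p) : SupportSet a p ⊆ IntervalSet a p := by
  rintro nu ⟨hnu, hsupp⟩
  have hdom := domLE_of_inSupportOv hsupp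
  obtain ⟨w, hr, -, hc, h0⟩ := hsupp
  have hcount := count_one_add_card_overlaps_le ha hr h0
  rw [hp.card_overlaps, ← zero_add 1, hc 0, hdom.1] at hcount
  exact ⟨hnu, hdom, hdom.1 ▸ domLE_pair hcount⟩

theorem not_inSupportOv_pair {a : List ℕ} {ov : ℕ → Bool} (h3 : 3 ≤ a.length)
    (hpos : 0 < a.getD 1 0) (hov : ov 1 = true) (m : ℕ) :
    ¬ InSupportOv a ov [a.getD 0 0, m] := by
  rintro ⟨w, hr, hy, hc, h0⟩
  have hfirst : (w.take (rowOffset a 1)).count 1 = w.count 1 := by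
    have h := sum_count_take_rowOffset hr hy h0 1
    rw [Finset.sum_range_one, rowOffset_one, zero_add] at h
    rw [rowOffset_one, h, ← zero_add 1, hc 0, List.getD_cons_zero]
  have hrest : (w.drop (rowOffset a 1)).count 1 = 0 := by
    have h := congrArg (List.count 1) (List.take_append_drop (rowOffset a 1) w)
    rw [List.count_append] at h
    omega
  have hle2 : ∀ x ∈ w, x ≤ 2 := by
    intro x hx
    by_contra! hx3
    obtain ⟨y, rfl⟩ := Nat.exists_eq_add_of_le' hx3
    have := hc (y + 2)
    rw [List.getD_eq_default _ _ (by simp)] at this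
    exact List.count_eq_zero.1 this hx
  have h12 : rowOffset a 2 = rowOffset a 1 + a.getD 1 0 := rowOffset_succ a 1
  have hasc := hr.2.2 1 (by omega) hov
  obtain ⟨hlen, -⟩ := two_le_getD_rowOffset_succ hr h0 (i := 1) (by omega) hov
  simp only [Nat.reduceAdd] at hasc hlen
  have hopen3 : w.getD (rowOffset a 2) 0 ≤ 2 := by
    rw [List.getD_eq_getElem _ _ hlen]
    exact hle2 _ (List.getElem_mem hlen)
  have hclose2 : w.getD (rowOffset a 2 - 1) 0 = 1 := by
    have := one_le_getD h0 (k := rowOffset a 2 - 1) (by omega)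
    omega
  have hmem : w.getD (rowOffset a 2 - 1) 0 ∈ w.drop (rowOffset a 1) := by
    rw [List.getD_eq_getElem _ _ (by omega), List.mem_drop_iff_getElem]
    exact ⟨rowOffset a 2 - 1 - rowOffset a 1, by omega, by congr 1; omega⟩
  rw [hclose2] at hmem
  exact List.count_eq_zero.1 hrest hmem

theorem pair_mem_intervalSet {a p : List ℕ} (hpos : 0 < (a.drop 1).sum)
    (hp : p.getD 0 0 ≤ (a.drop 1).sum) (h : (a.drop 1).sum ≤ a.getD 0 0) :
    [a.getD 0 0, (a.drop 1).sum] ∈ IntervalSet a p := by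
  have hsum : a.sum = a.getD 0 0 + (a.drop 1).sum := (getD_zero_add_sum_drop_one a).symm
  have hpair : [a.getD 0 0, (a.drop 1).sum].sum = a.sum := by simp [hsum]
  refine ⟨⟨List.pairwise_pair.2 h, List.forall_mem_cons.2 ⟨hpos.trans_le h,
    List.forall_mem_singleton.2 hpos⟩⟩, ⟨hpair.symm, ?_⟩, ?_⟩
  · rintro (_ | _ | i)
    · simp
    · exact (rowOffset_one a).le
    · exact (rowOffset_le_sum a _).trans_eq
        (by rw [← hpair, List.take_of_length_le (by simp)])
  · rw [← hpair]
    refine domLE_pair ?_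
    rw [hpair, hsum, List.getD_cons_zero]
    exact Nat.add_le_add_left hp _

/-! ### Construction of LR words -/

/-- `w` is the reading word of an LR filling of the ribbon `(a, ov)` with content `f`, where `f j`
is the number of letters `j + 1`. Contents are functions rather than lists so that they can be
changed part by part; `InSupportOv a ov nu` is the existence of such a `w` for
`f = (nu.getD · 0)`. -/
def IsLRWord (a : List ℕ) (ov : ℕ → Bool) (w : List ℕ) (f : ℕ → ℕ) : Prop :=
  IsRibbonWord a ov w ∧ IsYam w ∧ (∀ j, w.count (j + 1) = f j) ∧ w.count 0 = 0

/-- The skew shape `f / g` is a horizontal strip, i.e. the parts of `f` and `g` interlace. -/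
def IsHorizontalStrip (f g : ℕ → ℕ) : Prop := ∀ i, f (i + 1) ≤ g i ∧ g i ≤ f i

theorem isLRWord_nil (ov : ℕ → Bool) : IsLRWord [] ov [] fun _ => 0 :=
  ⟨⟨rfl, by simp, by simp⟩, by simp [IsYam], by simp, by simp⟩

theorem exists_pairwise_ge_count_eq {d : ℕ → ℕ} {n : ℕ} (hd : ∀ j, n ≤ j → d j = 0) :
    ∃ v : List ℕ, v.Pairwise (· ≥ ·) ∧ v.length = ∑ j ∈ Finset.range n, d j ∧
      (∀ j, v.count (j + 1) = d j) ∧ v.count 0 = 0 := by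
  let s : Multiset ℕ := ∑ j ∈ Finset.range n, Multiset.replicate (d j) (j + 1)
  have hcount (x : ℕ) : (s.sort (· ≥ ·)).count x = s.count x := by
    rw [← Multiset.coe_count, Multiset.sort_eq]
  refine ⟨s.sort (· ≥ ·), Multiset.pairwise_sort _ _, ?_, fun j => ?_, ?_⟩
  · simp [s]
  · have := hd j
    simp only [hcount, s, Multiset.count_sum', Multiset.count_replicate, Nat.add_right_cancel_iff,
      Finset.sum_ite_eq', Finset.mem_range, ite_eq_left_iff]
    omega
  · simp [hcount, s, Multiset.count_sum', Multiset.count_replicate]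

theorem IsYam.append {w v : List ℕ} (hw : IsYam w)
    (h : ∀ j, w.count (j + 2) + v.count (j + 2) ≤ w.count (j + 1)) : IsYam (w ++ v) := by
  intro k j
  rw [List.take_append, List.count_append, List.count_append]
  rcases le_or_gt k w.length with hk | hk
  · simpa [Nat.sub_eq_zero_of_le hk] using hw k j
  · rw [List.take_of_length_le hk.le]
    have := (List.take_sublist (k - w.length) v).count_le (j + 2)
    have := h j
    omega

theorem exists_mem_getLast?_append_le {w v : List ℕ} (hv : v.Pairwise (· ≥ ·)) {y : ℕ}
    (hy : y ∈ v) : ∃ x ∈ (w ++ v).getLast?, x ≤ y := by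
  have hne := List.ne_nil_of_mem hy
  refine ⟨v.getLast hne, by simp [List.getLast?_append, List.getLast?_eq_some_getLast hne], ?_⟩
  exact hv.rel_getLast hy

theorem le_getD_zero_of_mem {v : List ℕ} (hv : v.Pairwise (· ≥ ·)) {y : ℕ} (hy : y ∈ v) :
    y ≤ v.getD 0 0 := by
  obtain ⟨i, hi, rfl⟩ := List.mem_iff_getElem.1 hy
  rw [← List.getD_eq_getElem _ 0 hi]
  exact antitone_getD hv (Nat.zero_le i)

section AppendRow

variable {b w v : List ℕ} {ov : ℕ → Bool}

theorem IsRibbonWord.row_append (hw : IsRibbonWord b ov w) (hv : v.Pairwise (· ≥ ·)) {i j : ℕ}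
    (hi : i ≤ b.length) (hj : j + 1 < (b ++ [v.length]).getD i 0) :
    (w ++ v).getD (rowOffset b i + j + 1) 0 ≤ (w ++ v).getD (rowOffset b i + j) 0 := by
  obtain ⟨hlen, hrow, -⟩ := hw
  rcases hi.lt_or_eq with hi | rfl
  · rw [List.getD_append _ _ _ _ hi] at hj
    have := rowOffset_succ b i
    have := rowOffset_le_sum b (i + 1)
    rw [List.getD_append _ _ _ _ (by omega), List.getD_append _ _ _ _ (by omega)]
    exact hrow i j hi hj
  · rw [rowOffset_of_length_le le_rfl, ← hlen, add_assoc,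
      List.getD_append_right _ _ _ _ (by omega), List.getD_append_right _ _ _ _ (by omega),
      Nat.add_sub_cancel_left, Nat.add_sub_cancel_left]
    exact getD_succ_le_getD hv j

theorem IsRibbonWord.append_row (hw : IsRibbonWord b ov w) (hv : v.Pairwise (· ≥ ·))
    (hov : b ≠ [] → ov (b.length - 1) = true → ∃ x ∈ w.getLast?, ∃ y ∈ v, x < y) :
    IsRibbonWord (b ++ [v.length]) ov (w ++ v) := by
  refine ⟨by simp [hw.1], fun i j hi hj => ?_, fun i hi hovi => ?_⟩ <;>
    simp only [List.length_append, List.length_singleton] at hi <;>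
    rw [rowOffset_append_of_le_length (by omega)]
  · exact hw.row_append hv (by omega) hj
  rcases (show i + 1 ≤ b.length by omega).lt_or_eq with hib | hib
  · have hasc := hw.2.2 i hib hovi
    have hlt : rowOffset b (i + 1) < w.length := by
      by_contra h
      rw [List.getD_eq_default _ _ (not_lt.1 h)] at hasc
      omega
    rwa [List.getD_append _ _ _ _ (by omega), List.getD_append _ _ _ _ hlt]
  · obtain ⟨x, hx, y, hy, hxy⟩ := hov (by rintro rfl; simp at hib) (by rwa [← hib])
    have hwne : w ≠ [] := by rintro rfl; simp at hx
    have hwpos := List.length_pos_of_ne_nil hwne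
    rw [List.getLast?_eq_getElem?] at hx
    have hlast : w.getD (w.length - 1) 0 = x := by rw [List.getD, hx]; rfl
    rw [hib, rowOffset_of_length_le le_rfl, ← hw.1, List.getD_append _ _ _ _ (by omega),
      List.getD_append_right _ _ _ _ le_rfl, Nat.sub_self, hlast]
    exact hxy.trans_le (le_getD_zero_of_mem hv hy)

theorem IsLRWord.exists_append_row {f g : ℕ → ℕ} {c n : ℕ} (hw : IsLRWord b ov w g)
    (hfg : IsHorizontalStrip f g) (hf : ∀ j, n ≤ j → f j = 0)
    (hsum : ∑ j ∈ Finset.range n, g j + c = ∑ j ∈ Finset.range n, f j)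
    (hov : b ≠ [] → ov (b.length - 1) = true → ∃ x ∈ w.getLast?, ∃ k, x ≤ k ∧ g k < f k) :
    ∃ w', IsLRWord (b ++ [c]) ov w' f ∧ ∀ k, g k < f k → ∃ x ∈ w'.getLast?, x ≤ k + 1 := by
  obtain ⟨hr, hy, hcount, h0⟩ := hw
  obtain ⟨v, hv, hvlen, hvcount, hv0⟩ := exists_pairwise_ge_count_eq (d := fun j => f j - g j)
    (n := n) fun j hj => by rw [hf j hj, Nat.zero_sub]
  have hmem : ∀ k, g k < f k → k + 1 ∈ v := fun k hk =>
    List.count_pos_iff.1 (by rw [hvcount]; exact Nat.sub_pos_of_lt hk)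
  have hadd : ∀ j, w.count (j + 1) + v.count (j + 1) = f j := fun j => by
    rw [hcount, hvcount, Nat.add_sub_cancel' (hfg j).2]
  have hvc : v.length = c := by
    rw [hvlen, Finset.sum_tsub_distrib _ fun i _ => (hfg i).2]
    omega
  refine ⟨w ++ v, ⟨hvc ▸ hr.append_row hv ?_, hy.append fun j => ?_, fun j => ?_, ?_⟩,
    fun k hk => exists_mem_getLast?_append_le hv (hmem k hk)⟩
  · intro hb hovb
    obtain ⟨x, hx, k, hxk, hk⟩ := hov hb hovb
    exact ⟨x, hx, k + 1, hmem k hk, Nat.lt_succ_of_le hxk⟩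
  · rw [hadd (j + 1), hcount]
    exact (hfg j).1
  · rw [List.count_append, hadd]
  · rw [List.count_append, h0, hv0]

end AppendRow

/-! ### Removing the last row -/

/-- `f` is a partition of `|a|`, given by its parts, that dominates `a` and has at most as many
parts as `a`. -/
structure Dominates (f : ℕ → ℕ) (a : List ℕ) : Prop where
  antitone : Antitone f
  eq_zero : ∀ j, a.length ≤ j → f j = 0
  sum_eq : ∑ j ∈ Finset.range a.length, f j = a.sum
  rowOffset_le : ∀ i, rowOffset a i ≤ ∑ j ∈ Finset.range i, f j

/-- `f` is an element of the interval `[a, (|a| - 2, 2)]`, given by its parts, other than the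
two-row partition `(a₁, |a| - a₁)`. These turn out to be the contents of the LR words of the
ribbon `R_a^(2,1,0,…,0)`. -/
structure Admissible (f : ℕ → ℕ) (a : List ℕ) : Prop extends Dominates f a where
  add_two_le : f 0 + 2 ≤ a.sum
  third_pos : f 0 = a.getD 0 0 → 0 < f 2

/-- The result of removing from `f` a horizontal strip of `c` boxes lying as low as possible, hence
the largest such result in dominance order. At most `f i` boxes fit in the rows from `i` on, so the
rows above lose `c - f i`. -/
def removeLowStrip (f : ℕ → ℕ) (c : ℕ) : ℕ → ℕ := fun i => (f i - c) + min c (f (i + 1))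

/-- The parts of the partition `(x, y, z)`. -/
def threeParts (x y z : ℕ) : ℕ → ℕ
  | 0 => x
  | 1 => y
  | 2 => z
  | _ => 0

theorem isHorizontalStrip_removeLowStrip {f : ℕ → ℕ} (hf : Antitone f) (c : ℕ) :
    IsHorizontalStrip f (removeLowStrip f c) := by
  intro i
  have := hf (Nat.le_add_right i 1)
  simp only [removeLowStrip]
  omega

theorem IsHorizontalStrip.antitone {f g : ℕ → ℕ} (h : IsHorizontalStrip f g) : Antitone g :=
  antitone_nat_of_succ_le fun i => (h (i + 1)).2.trans (h i).1

theorem sum_range_removeLowStrip (f : ℕ → ℕ) (c i : ℕ) :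
    ∑ j ∈ Finset.range i, removeLowStrip f c j + min c (f 0) =
      ∑ j ∈ Finset.range i, f j + min c (f i) := by
  induction i with
  | zero => simp
  | succ i ih =>
    have : removeLowStrip f c i = (f i - c) + min c (f (i + 1)) := rfl
    rw [Finset.sum_range_succ, Finset.sum_range_succ]
    omega

theorem Dominates.removeLowStrip {f : ℕ → ℕ} {a : List ℕ} {c : ℕ} (hc : ∀ x ∈ a, c ≤ x)
    (hf : Dominates f (a ++ [c])) : Dominates (removeLowStrip f c) a := by
  have hc0 : min c (f 0) = c := by
    have h := (rowOffset_add_le_rowOffset_concat hc 0).trans (hf.rowOffset_le 1)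
    rw [rowOffset_zero, Finset.sum_range_one] at h
    omega
  have htot : ∑ j ∈ Finset.range a.length, f j + f a.length = a.sum + c := by
    have h := hf.sum_eq
    rwa [List.length_append, List.length_singleton, Finset.sum_range_succ, List.sum_append,
      List.sum_singleton] at h
  have hpartial (i : ℕ) : rowOffset a i ≤ ∑ j ∈ Finset.range i, f j := by
    refine le_trans ?_ (hf.rowOffset_le i)
    rw [rowOffset, rowOffset, List.take_append, List.sum_append]
    exact Nat.le_add_right _ _
  have hlast : f a.length ≤ c := by
    have h := hpartial a.length
    rw [rowOffset_of_length_le le_rfl] at h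
    omega
  have hbeyond (j : ℕ) (hj : a.length < j) : f j = 0 := hf.eq_zero j (by simpa using hj)
  refine ⟨(isHorizontalStrip_removeLowStrip hf.antitone c).antitone, fun j hj => ?_, ?_,
    fun i => ?_⟩
  · have := hf.antitone hj
    have := hbeyond (j + 1) (by omega)
    simp only [RibbonSupport.removeLowStrip]
    omega
  · have := sum_range_removeLowStrip f c a.length
    omega
  · have hsum := sum_range_removeLowStrip f c i
    have hnext := (rowOffset_add_le_rowOffset_concat hc i).trans (hf.rowOffset_le (i + 1))
    have := hpartial i
    rw [Finset.sum_range_succ] at hnext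
    omega

theorem sum_range_of_fourth_eq_zero {f : ℕ → ℕ} (hf : Antitone f) (h3 : f 3 = 0) {n : ℕ}
    (hn : 3 ≤ n) : ∑ j ∈ Finset.range n, f j = f 0 + f 1 + f 2 := by
  rw [← Finset.sum_range_add_sum_Ico f hn, Finset.sum_eq_zero (s := Finset.Ico 3 n), add_zero]
  · simp [Finset.sum_range_succ]
  · intro j hj
    exact Nat.eq_zero_of_le_zero (h3 ▸ hf (Finset.mem_Ico.1 hj).1)

theorem threeParts_of_three_le (x y z : ℕ) {j : ℕ} (hj : 3 ≤ j) : threeParts x y z j = 0 := by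
  obtain ⟨k, rfl⟩ := Nat.exists_eq_add_of_le' hj
  rfl

theorem antitone_threeParts {x y z : ℕ} (hyx : y ≤ x) (hzy : z ≤ y) :
    Antitone (threeParts x y z) :=
  antitone_nat_of_succ_le fun
    | 0 => hyx
    | 1 => hzy
    | 2 => Nat.zero_le z
    | _ + 3 => le_rfl

theorem isHorizontalStrip_threeParts {f : ℕ → ℕ} {x y z : ℕ} (hf : ∀ j, 3 ≤ j → f j = 0)
    (hx : f 1 ≤ x ∧ x ≤ f 0) (hy : f 2 ≤ y ∧ y ≤ f 1) (hz : z ≤ f 2) :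
    IsHorizontalStrip f (threeParts x y z)
  | 0 => hx
  | 1 => hy
  | 2 => ⟨(hf 3 le_rfl).trans_le (Nat.zero_le z), hz⟩
  | i + 3 => ⟨(hf (i + 4) (by omega)).le, Nat.zero_le _⟩

theorem isHorizontalStrip_threeParts_zero (x : ℕ) :
    IsHorizontalStrip (threeParts x 0 0) fun _ => 0
  | 0 => ⟨le_rfl, Nat.zero_le x⟩
  | 1 | 2 | _ + 3 => ⟨le_rfl, le_rfl⟩

theorem admissible_threeParts {a : List ℕ} (ha : 3 ≤ a.length) {x y z : ℕ} (hyx : y ≤ x)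
    (hzy : z ≤ y) (hsum : x + y + z = a.sum) (h1 : rowOffset a 1 ≤ x)
    (h2 : rowOffset a 2 ≤ x + y) (h2N : x + 2 ≤ a.sum) (hz : x = rowOffset a 1 → 0 < z) :
    Admissible (threeParts x y z) a := by
  have hanti := antitone_threeParts hyx hzy
  have htot (n : ℕ) (hn : 3 ≤ n) : ∑ j ∈ Finset.range n, threeParts x y z j = a.sum :=
    (sum_range_of_fourth_eq_zero hanti rfl hn).trans hsum
  refine ⟨⟨hanti, fun j hj => threeParts_of_three_le x y z (ha.trans hj), htot _ ha, ?_⟩, h2N,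
    rowOffset_one a ▸ hz⟩
  rintro (_ | _ | _ | i)
  · exact Nat.zero_le _
  · simpa [threeParts] using h1
  · simpa [Finset.sum_range_succ, threeParts] using h2
  · exact (rowOffset_le_sum a _).trans_eq (htot _ (by omega)).symm

/-- The arithmetic of removing a horizontal strip of `c` boxes from `(f₀, f₁, f₂)` so that
`(x, y, z)` stays in the interval above `(A₁, A₂ - A₁, …)` of size `N`: the strip is taken as low
as possible, unless this leaves the first row longer than `N - 2`, or equal to `A₁` with an empty
third row. -/
theorem exists_threeParts_of_strip {f₀ f₁ f₂ A₁ A₂ N c : ℕ} (hc : 0 < c) (h10 : f₁ ≤ f₀)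
    (h21 : f₂ ≤ f₁) (hsum : f₀ + f₁ + f₂ = N + c) (hA1 : A₁ ≤ f₀) (hA2 : A₂ ≤ f₀ + f₁)
    (htwo : f₀ + 2 ≤ N + c) (hthird : f₀ = A₁ → 0 < f₂) (hcA : c ≤ A₁) (hA2N : A₂ + c ≤ N)
    (hA2two : A₁ + 2 ≤ A₂) :
    ∃ x y z, (f₁ ≤ x ∧ x ≤ f₀) ∧ (f₂ ≤ y ∧ y ≤ f₁) ∧ z ≤ f₂ ∧ x + y + z = N ∧ A₁ ≤ x ∧
      A₂ ≤ x + y ∧ x + 2 ≤ N ∧ (x = A₁ → 0 < z) := by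
  by_cases hlong : N ≤ (f₀ - c) + min c f₁ + 1
  · rcases lt_or_ge 1 f₁ with h1 | h1
    · exact ⟨N - 2, 2, 0, by omega⟩
    · exact ⟨N - 2, 1, 1, by omega⟩
  by_cases hflat : (f₀ - c) + min c f₁ = A₁ ∧ f₂ ≤ c
  · exact ⟨A₁, N - A₁ - 1, 1, by omega⟩
  · exact ⟨(f₀ - c) + min c f₁, (f₁ - c) + min c f₂, f₂ - c, by omega⟩

theorem Admissible.exists_remove_last_row_of_fourth_eq_zero {f : ℕ → ℕ} {a : List ℕ} {c : ℕ}
    (ha : IsPartition (a ++ [c])) (h3 : 3 ≤ a.length) (h2 : 2 ≤ a.getD 1 0) (hf3 : f 3 = 0)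
    (hf : Admissible f (a ++ [c])) : ∃ g, Admissible g a ∧ IsHorizontalStrip f g := by
  obtain ⟨-, -, hlast⟩ := List.pairwise_append.1 ha.1
  have hc : 0 < c := ha.2 c (by simp)
  have hca (i : ℕ) (hi : i < a.length) : c ≤ a.getD i 0 := by
    rw [List.getD_eq_getElem _ _ hi]
    exact hlast _ (List.getElem_mem hi) c (List.mem_singleton_self c)
  have hdom (i : ℕ) (hi : i ≤ a.length) : rowOffset a i ≤ ∑ j ∈ Finset.range i, f j :=
    rowOffset_append_of_le_length hi [c] ▸ hf.rowOffset_le i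
  have hsum : f 0 + f 1 + f 2 = a.sum + c := by
    rw [← sum_range_of_fourth_eq_zero hf.antitone hf3 (n := (a ++ [c]).length)
        (h3.trans (by simp)),
      hf.sum_eq, List.sum_append, List.sum_singleton]
  have h1 : rowOffset a 1 ≤ f 0 := by simpa using hdom 1 (by omega)
  have h12 : rowOffset a 2 ≤ f 0 + f 1 := by
    simpa [Finset.sum_range_succ] using hdom 2 (by omega)
  have htwo : f 0 + 2 ≤ a.sum + c := by simpa using hf.add_two_le
  have hthird : f 0 = rowOffset a 1 → 0 < f 2 := by
    rw [rowOffset_one, ← List.getD_append a [c] 0 0 (by omega)]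
    exact hf.third_pos
  have := hca 0 (by omega)
  have := hca 2 (by omega)
  have := rowOffset_one a
  have : rowOffset a 2 = rowOffset a 1 + a.getD 1 0 := rowOffset_succ a 1
  have : rowOffset a 3 = rowOffset a 2 + a.getD 2 0 := rowOffset_succ a 2
  have := rowOffset_le_sum a 3
  obtain ⟨x, y, z, hx, hy, hz, hxyz, hAx, hAxy, hxN, hpos⟩ := exists_threeParts_of_strip hc
    (hf.antitone zero_le_one) (hf.antitone one_le_two) hsum h1 h12 htwo hthird (by omega)
    (by omega) (by omega)
  have hzero (j : ℕ) (hj : 3 ≤ j) : f j = 0 := Nat.eq_zero_of_le_zero (hf3 ▸ hf.antitone hj)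
  exact ⟨threeParts x y z,
    admissible_threeParts h3 (by omega) (by omega) hxyz hAx hAxy hxN hpos,
    isHorizontalStrip_threeParts hzero hx hy hz⟩

theorem Admissible.exists_remove_last_row {f : ℕ → ℕ} {a : List ℕ} {c : ℕ}
    (ha : IsPartition (a ++ [c])) (h3 : 3 ≤ a.length) (h2 : 2 ≤ a.getD 1 0)
    (hf : Admissible f (a ++ [c])) : ∃ g, Admissible g a ∧ IsHorizontalStrip f g := by
  rcases Nat.eq_zero_or_pos (f 3) with hf3 | hf3
  · exact hf.exists_remove_last_row_of_fourth_eq_zero ha h3 h2 hf3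
  have hlow := hf.toDominates.removeLowStrip fun x hx =>
    (List.pairwise_append.1 ha.1).2.2 x hx c (List.mem_singleton_self c)
  have hstrip := isHorizontalStrip_removeLowStrip hf.antitone c
  have h2pos : 0 < removeLowStrip f c 2 := hf3.trans_le (hstrip 2).1
  refine ⟨_, ⟨hlow, ?_, fun _ => h2pos⟩, hstrip⟩
  have hle : ∑ j ∈ Finset.range 3, removeLowStrip f c j ≤ a.sum :=
    (Finset.sum_le_sum_of_subset (Finset.range_mono h3)).trans_eq hlow.sum_eq
  have := hlow.antitone one_le_two
  simp only [Finset.sum_range_succ, Finset.sum_range_zero] at hle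
  omega

/-! ### Filling the ribbon -/

-- Here `x` is the number of letters `1` in the second row of an LR filling with content `f` of the
-- ribbon with rows `a`, `b`, `c`, whose second row consists of `1`s and `2`s.
theorem Admissible.exists_second_row {a b c : ℕ} {f : ℕ → ℕ} (hb : 2 ≤ b) (hba : b ≤ a)
    (hc : 0 < c) (hcb : c ≤ b) (hf : Admissible f [a, b, c]) :
    ∃ x < b, (f 1 ≤ a + x ∧ a + x ≤ f 0) ∧ (f 2 ≤ b - x ∧ b - x ≤ f 1) ∧
      (x = 0 → 0 < f 2) ∧ (f 2 = 0 → b - x < f 1) := by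
  have hsum : f 0 + f 1 + f 2 = a + b + c := by
    simpa [Finset.sum_range_succ, add_assoc] using hf.sum_eq
  have h0 : a ≤ f 0 := by simpa [rowOffset] using hf.rowOffset_le 1
  have h01 : a + b ≤ f 0 + f 1 := by
    simpa [Finset.sum_range_succ, rowOffset] using hf.rowOffset_le 2
  have htwo : f 0 + 2 ≤ a + b + c := by simpa [add_assoc] using hf.add_two_le
  have hthird : f 0 = a → 0 < f 2 := by simpa using hf.third_pos
  have h10 := hf.antitone zero_le_one
  have h21 := hf.antitone one_le_two
  rcases Nat.eq_zero_or_pos (f 2) with h | h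
  · exact ⟨max 1 (max (b + 1 - f 1) (f 1 - a)), by omega⟩
  · exact ⟨max (b - f 1) (f 1 - a), by omega⟩

theorem Admissible.exists_isLRWord_three {a b c : ℕ} {ov : ℕ → Bool} {f : ℕ → ℕ} (hb : 2 ≤ b)
    (hba : b ≤ a) (hc : 0 < c) (hcb : c ≤ b) (hf : Admissible f [a, b, c]) :
    ∃ w, IsLRWord [a, b, c] ov w f := by
  obtain ⟨x, hxb, hx1, hx2, hxpos, hxz⟩ := hf.exists_second_row hb hba hc hcb
  have hba' : b - x ≤ a := (Nat.sub_le b x).trans hba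
  obtain ⟨w₁, hw₁, hlast₁⟩ := (isLRWord_nil ov).exists_append_row (f := threeParts a 0 0) (c := a)
    (n := 3) (isHorizontalStrip_threeParts_zero a) (fun j => threeParts_of_three_le a 0 0)
    (by simp [Finset.sum_range_succ, threeParts]) fun h => absurd rfl h
  obtain ⟨w₂, hw₂, hlast₂⟩ := hw₁.exists_append_row (f := threeParts (a + x) (b - x) 0) (c := b)
    (n := 3)
    (isHorizontalStrip_threeParts (fun j => threeParts_of_three_le (a + x) (b - x) 0)
      ⟨hba', Nat.le_add_right a x⟩ ⟨le_rfl, Nat.zero_le _⟩ le_rfl)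
    (fun j => threeParts_of_three_le (a + x) (b - x) 0)
    (by simp only [Finset.sum_range_succ, Finset.sum_range_zero, threeParts]; omega)
    fun _ _ => by
      obtain ⟨y, hy, hy1⟩ := hlast₁ 0 (show 0 < a by omega)
      exact ⟨y, hy, 1, hy1, Nat.sub_pos_of_lt hxb⟩
  obtain ⟨w₃, hw₃, -⟩ := hw₂.exists_append_row (f := f) (c := c) (n := 3)
    (isHorizontalStrip_threeParts hf.eq_zero hx1 hx2 (Nat.zero_le _)) hf.eq_zero
    (by
      rw [show ∑ j ∈ Finset.range 3, f j = [a, b, c].sum from hf.sum_eq]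
      simp only [Finset.sum_range_succ, Finset.sum_range_zero, threeParts, List.sum_cons,
        List.sum_nil]
      omega)
    fun _ _ => by
      rcases Nat.eq_zero_or_pos x with rfl | hx
      · obtain ⟨y, hy, hy2⟩ := hlast₂ 1 (Nat.sub_pos_of_lt hxb)
        exact ⟨y, hy, 2, hy2, hxpos rfl⟩
      · obtain ⟨y, hy, hy1⟩ := hlast₂ 0 (Nat.lt_add_of_pos_right hx)
        rcases Nat.eq_zero_or_pos (f 2) with h | h
        · exact ⟨y, hy, 1, hy1, hxz h⟩
        · exact ⟨y, hy, 2, hy1.trans one_le_two, h⟩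
  exact ⟨w₃, hw₃⟩

theorem exists_isLRWord {a : List ℕ} {ov : ℕ → Bool} {f : ℕ → ℕ} (ha : IsPartition a)
    (h3 : 3 ≤ a.length) (h2 : 2 ≤ a.getD 1 0) (hov : ∀ i, 2 ≤ i → ov i = false)
    (hf : Admissible f a) : ∃ w, IsLRWord a ov w f := by
  induction a using List.reverseRecOn generalizing f with
  | nil => simp at h3
  | append_singleton b c ih =>
    rcases h3.eq_or_lt with h3 | h3
    · obtain ⟨r, s, t, hrst⟩ := List.length_eq_three.1 h3.symm
      rw [hrst] at ha h2 hf ⊢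
      exact hf.exists_isLRWord_three h2 (getD_succ_le_getD ha.1 0) (ha.2 t (by simp))
        (getD_succ_le_getD ha.1 1)
    have hlen : 3 ≤ b.length := by
      rw [List.length_append, List.length_singleton] at h3
      omega
    rw [List.getD_append _ _ _ _ (by omega)] at h2
    obtain ⟨g, hg, hfg⟩ := hf.exists_remove_last_row ha hlen h2
    have hb : IsPartition b := ⟨(List.pairwise_append.1 ha.1).1, fun x hx => ha.2 x (by simp [hx])⟩
    obtain ⟨w, hw⟩ := ih hb hlen h2 hg
    have hsum : ∑ j ∈ Finset.range (b ++ [c]).length, g j + c =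
        ∑ j ∈ Finset.range (b ++ [c]).length, f j := by
      rw [hf.sum_eq, List.length_append, List.length_singleton, Finset.sum_range_succ, hg.sum_eq,
        hg.eq_zero _ le_rfl, List.sum_append, List.sum_singleton, add_zero]
    have hno : ov (b.length - 1) ≠ true := by rw [hov _ (by omega)]; simp
    obtain ⟨w', hw', -⟩ := hw.exists_append_row hfg hf.eq_zero hsum fun _ h => absurd h hno
    exact ⟨w', hw'⟩

/-! ### The overlapping partition `(2, 1, 0, …, 0)` -/

theorem dominates_of_domLE {a nu : List ℕ} (hnu : nu.Pairwise (· ≥ ·)) (h : DomLE a nu) :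
    Dominates (nu.getD · 0) a := by
  have hsum : rowOffset nu a.length = a.sum := by
    refine le_antisymm ((rowOffset_le_sum nu _).trans h.1.ge) ?_
    exact (rowOffset_of_length_le le_rfl).ge.trans (h.2 a.length)
  refine ⟨antitone_getD hnu, fun j hj => ?_, ?_, fun i => ?_⟩
  · have := rowOffset_mono nu hj
    have := rowOffset_le_sum nu (j + 1)
    rw [rowOffset_succ, ← h.1] at this
    omega
  · rw [← rowOffset_eq_sum_range, hsum]
  · rw [← rowOffset_eq_sum_range]
    exact h.2 i

theorem admissible_of_mem_intervalSet {a p nu : List ℕ} (ha : 3 ≤ a.length)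
    (hlt : a.getD 0 0 < (a.drop 1).sum) (hp : p.getD 0 0 = 2) (hnu : nu ∈ IntervalSet a p) :
    Admissible (nu.getD · 0) a := by
  obtain ⟨hpart, hdom, hle⟩ := hnu
  have hf := dominates_of_domLE hpart.1 hdom
  have hsum := getD_zero_add_sum_drop_one a
  rw [hp] at hle
  refine ⟨hf, ?_, fun hfirst => ?_⟩
  · have h1 : rowOffset nu 1 ≤ a.sum - 2 := hle.2 1
    have htot : a.sum = a.sum - 2 + 2 := hdom.1.trans hle.1
    rw [rowOffset_one] at h1
    omega
  · by_contra hthird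
    have h3 : nu.getD 3 0 = 0 := by
      have : nu.getD 3 0 ≤ nu.getD 2 0 := hf.antitone (Nat.le_succ 2)
      omega
    have htot := (sum_range_of_fourth_eq_zero hf.antitone h3 ha).symm.trans hf.sum_eq
    have : nu.getD 1 0 ≤ nu.getD 0 0 := hf.antitone zero_le_one
    omega

theorem isOverlapSeq_two_one {a : List ℕ} (h3 : 3 ≤ a.length) :
    IsOverlapSeq a ([2, 1] ++ List.replicate (a.length - 2) 0) := by
  refine ⟨?_, ?_, ?_⟩
  · simp only [List.length_append, List.length_cons, List.length_nil, List.length_replicate]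
    omega
  · obtain ⟨m, hm⟩ := Nat.exists_eq_add_of_le' h3
    simp [hm]
  · rintro (_ | _ | i) _ <;> simp

theorem ovOf_two_one (n i : ℕ) : ovOf ([2, 1] ++ List.replicate n 0) i = decide (i < 2) := by
  rcases i with _ | _ | i
  · rfl
  · cases n <;> rfl
  · simp [ovOf]

theorem full_support_overlap_two_one_general (a : List ℕ) (ha : IsPartition a)
    (h3 : 3 ≤ a.length) (h2 : 2 ≤ a.getD 1 0) :
    FullSupport a ([2, 1] ++ List.replicate (a.length - 2) 0) ↔ a.getD 0 0 < (a.drop 1).sum := by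
  set p := [2, 1] ++ List.replicate (a.length - 2) 0
  have hp0 : p.getD 0 0 = 2 := rfl
  constructor
  · intro hfull
    by_contra! hge
    have htail : 2 ≤ (a.drop 1).sum := by
      have := rowOffset_le_sum a 2
      rw [rowOffset_succ, rowOffset_one, ← getD_zero_add_sum_drop_one a] at this
      omega
    have hmem : [a.getD 0 0, (a.drop 1).sum] ∈ SupportSet a p :=
      hfull ▸ pair_mem_intervalSet (by omega) htail hge
    exact not_inSupportOv_pair h3 (by omega) (ovOf_two_one _ 1) _ hmem.2
  · refine fun hlt => (supportSet_subset_intervalSet ha.2 (isOverlapSeq_two_one h3)).antisymm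
      fun nu hnu => ⟨hnu.1, ?_⟩
    refine exists_isLRWord ha h3 h2 (fun i hi => ?_) (admissible_of_mem_intervalSet h3 hlt hp0 hnu)
    rw [ovOf_two_one, decide_eq_false (not_lt.2 hi)]

/-- Corollary `cor:full` (a): for a partition `a` with parts ≥ 2,
`ℓ(a) ≥ 3` and overlapping partition `p = (2,1,0,…,0)`, the ribbon `R_a^p` has full Schur
support `[a, (|a|−2, 2)]` iff `a₁ < Σ_{q=2}^{ℓ(a)} a_q`. -/
theorem full_support_overlap_two_one
    (a : List ℕ) (ha : IsPartition a) (h2 : PartsGE a 2) (h3 : 3 ≤ a.length) :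
    FullSupport a ([2, 1] ++ List.replicate (a.length - 2) 0) ↔
      a.getD 0 0 < (a.drop 1).sum :=
  full_support_overlap_two_one_general a ha h3 <| by
    rw [List.getD_eq_getElem _ _ (by omega)]
    exact h2 _ (List.getElem_mem _)

end RibbonSupport
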